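/- arXiv:2306.07018 — 2 statements merged into one kernel-verified Lean document; each statement's English description precedes it below -/
import Mathlib

section
/- Under Independence, Relevance, Monotonicity, and the Double exclusion restriction, the reduced form decomposes as ΔE[Y|Z] = E[Y(1,1)−Y(0,0); {C1,C2}] + E[Y(1,0)−Y(0,0); {C1,N2}] + E[Y(1,1)−Y(0,1); {C1,A2}]. (Lemma 2.5) -/
open MeasureTheory ProbabilityTheory

noncomputable section

variable {Ω : Type*} [MeasurableSpace Ω]

/-- Observed first-part treatment: `D1 = D1(1)·Z + D1(0)·(1−Z)`. -/
def obsD1 (Z : Ω → ℝ) (D1 : Bool → Ω → ℝ) (ω : Ω) : ℝ :=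
  D1 true ω * Z ω + D1 false ω * (1 - Z ω)

/-- Observed second-part treatment. -/
def obsD2 (Z : Ω → ℝ) (D1 : Bool → Ω → ℝ) (D2 : Bool → Bool → Ω → ℝ) (ω : Ω) : ℝ :=
  (D2 true true ω * obsD1 Z D1 ω + D2 true false ω * (1 - obsD1 Z D1 ω)) * Z ω +
  (D2 false true ω * obsD1 Z D1 ω + D2 false false ω * (1 - obsD1 Z D1 ω)) * (1 - Z ω)

/-- Summary treatment `D∧ = D1·D2`. -/
def obsDand (Z : Ω → ℝ) (D1 : Bool → Ω → ℝ) (D2 : Bool → Bool → Ω → ℝ) (ω : Ω) : ℝ :=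
  obsD1 Z D1 ω * obsD2 Z D1 D2 ω

/-- Summary treatment `D∨ = D1 + D2 − D1·D2`. -/
def obsDor (Z : Ω → ℝ) (D1 : Bool → Ω → ℝ) (D2 : Bool → Bool → Ω → ℝ) (ω : Ω) : ℝ :=
  obsD1 Z D1 ω + obsD2 Z D1 D2 ω - obsD1 Z D1 ω * obsD2 Z D1 D2 ω

/-- Observed outcome `Y = Σ_{d1,d2} Y(Z,d1,d2)·1{D1=d1, D2=d2}`, written out using that the
observed treatments and the instrument are {0,1}-valued. The first index of `Yp` is `z`, the
second is `d1`, the third is `d2`. -/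
def obsY (Z : Ω → ℝ) (D1 : Bool → Ω → ℝ) (D2 : Bool → Bool → Ω → ℝ)
    (Yp : Bool → Bool → Bool → Ω → ℝ) (ω : Ω) : ℝ :=
  (Yp true true true ω * obsD1 Z D1 ω * obsD2 Z D1 D2 ω +
   Yp true false true ω * (1 - obsD1 Z D1 ω) * obsD2 Z D1 D2 ω +
   Yp true true false ω * obsD1 Z D1 ω * (1 - obsD2 Z D1 D2 ω) +
   Yp true false false ω * (1 - obsD1 Z D1 ω) * (1 - obsD2 Z D1 D2 ω)) * Z ω +
  (Yp false true true ω * obsD1 Z D1 ω * obsD2 Z D1 D2 ω +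
   Yp false false true ω * (1 - obsD1 Z D1 ω) * obsD2 Z D1 D2 ω +
   Yp false true false ω * obsD1 Z D1 ω * (1 - obsD2 Z D1 D2 ω) +
   Yp false false false ω * (1 - obsD1 Z D1 ω) * (1 - obsD2 Z D1 D2 ω)) * (1 - Z ω)

/-- `ΔE[A|Z] := E[A | Z = 1] − E[A | Z = 0]`, expectations under conditional measures. -/
def dE (μ : Measure Ω) (Z A : Ω → ℝ) : ℝ :=
  (∫ ω, A ω ∂(μ[|Z ⁻¹' {1}])) - (∫ ω, A ω ∂(μ[|Z ⁻¹' {0}]))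

/-- The full-complier event `{C1,C2}`. -/
def CCev (D1 : Bool → Ω → ℝ) (D2 : Bool → Bool → Ω → ℝ) : Set Ω :=
  {ω | D1 true ω - D1 false ω = 1 ∧ D2 true true ω - D2 false false ω = 1}

/-- The mover event `{C1,N2}`. -/
def CNev (D1 : Bool → Ω → ℝ) (D2 : Bool → Bool → Ω → ℝ) : Set Ω :=
  {ω | D1 true ω - D1 false ω = 1 ∧ D2 true true ω = 0 ∧ D2 false false ω = 0}

/-- The mover event `{C1,A2}`. -/
def CAev (D1 : Bool → Ω → ℝ) (D2 : Bool → Bool → Ω → ℝ) : Set Ω :=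
  {ω | D1 true ω - D1 false ω = 1 ∧ D2 true true ω = 1 ∧ D2 false false ω = 1}

/-- The mover event `{N1,C2}`. -/
def NCev (D1 : Bool → Ω → ℝ) (D2 : Bool → Bool → Ω → ℝ) : Set Ω :=
  {ω | D1 true ω = 0 ∧ D1 false ω = 0 ∧ D2 true false ω - D2 false false ω = 1}

/-- The mover event `{A1,C2}`. -/
def ACev (D1 : Bool → Ω → ℝ) (D2 : Bool → Bool → Ω → ℝ) : Set Ω :=
  {ω | D1 true ω = 1 ∧ D1 false ω = 1 ∧ D2 true true ω - D2 false true ω = 1}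

/-! By independence, conditioning on `Z = z` replaces the observed outcome by the outcome
`Y(D1(z), D2(D1(z)))` induced by `z`, so the reduced form is the mean of the pointwise effect of
switching the instrument from `0` to `1`. Under double exclusion this effect vanishes unless `D1`
responds to `Z`. For a complier of the first part it is `Y(1, D2(1)) - Y(0, D2(0))`, where
monotonicity leaves only the pairs `(1, 0)`, `(0, 0)` and `(1, 1)` for `(D2(1), D2(0))`: these
are the events `{C1,C2}`, `{C1,N2}` and `{C1,A2}`. -/

/-- The value `f(d)` of a family of potential variables `f` at a realized treatment `d ∈ {0,1}`,
as the polynomial in `d` used in the formulas for the observed variables. -/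
def realizedAt (f : Bool → ℝ) (d : ℝ) : ℝ :=
  f true * d + f false * (1 - d)

@[simp]
theorem realizedAt_one (f : Bool → ℝ) : realizedAt f 1 = f true := by
  simp [realizedAt]

@[simp]
theorem realizedAt_zero (f : Bool → ℝ) : realizedAt f 0 = f false := by
  simp [realizedAt]

/-- The second-part treatment `D2(z, D1(z))` induced by setting the instrument to `z`. -/
def inducedD2 (D1 : Bool → Ω → ℝ) (D2 : Bool → Bool → Ω → ℝ) (z : Bool) (ω : Ω) : ℝ :=
  realizedAt (D2 z · ω) (D1 z ω)

/-- The outcome `Y(z, D1(z), D2(z, D1(z)))` induced by setting the instrument to `z`. -/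
def inducedY (D1 : Bool → Ω → ℝ) (D2 : Bool → Bool → Ω → ℝ) (Yp : Bool → Bool → Bool → Ω → ℝ)
    (z : Bool) (ω : Ω) : ℝ :=
  realizedAt (fun d1 => realizedAt (Yp z d1 · ω) (inducedD2 D1 D2 z ω)) (D1 z ω)

/-- The contributions of the complier types `{C1,C2}`, `{C1,N2}` and `{C1,A2}` to the effect of the
instrument on the outcome. -/
def complierEffect (D1 : Bool → Ω → ℝ) (D2 : Bool → Bool → Ω → ℝ)
    (Yp : Bool → Bool → Bool → Ω → ℝ) (ω : Ω) : ℝ :=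
  (CCev D1 D2).indicator (fun ω => Yp true true true ω - Yp true false false ω) ω +
  (CNev D1 D2).indicator (fun ω => Yp true true false ω - Yp true false false ω) ω +
  (CAev D1 D2).indicator (fun ω => Yp true true true ω - Yp true false true ω) ω

section Pointwise

variable {α : Type*} {Z : α → ℝ} {D1 : Bool → α → ℝ} {D2 : Bool → Bool → α → ℝ}
  {Yp : Bool → Bool → Bool → α → ℝ}

theorem obsY_of_instrument_eq_one {ω : α} (hZ : Z ω = 1) :
    obsY Z D1 D2 Yp ω = inducedY D1 D2 Yp true ω := by
  simp only [obsY, obsD2, obsD1, inducedY, inducedD2, realizedAt, hZ]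
  ring

theorem obsY_of_instrument_eq_zero {ω : α} (hZ : Z ω = 0) :
    obsY Z D1 D2 Yp ω = inducedY D1 D2 Yp false ω := by
  simp only [obsY, obsD2, obsD1, inducedY, inducedD2, realizedAt, hZ]
  ring

theorem inducedD2_eq_zero_or_one {z : Bool} {ω : α} (hD1 : D1 z ω = 0 ∨ D1 z ω = 1)
    (hD2 : ∀ d1, D2 z d1 ω = 0 ∨ D2 z d1 ω = 1) :
    inducedD2 D1 D2 z ω = 0 ∨ inducedD2 D1 D2 z ω = 1 := by
  rcases hD1 with h | h <;> simpa [inducedD2, h] using hD2 _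

theorem inducedY_eq_of_D1_eq {ω : α} (hD1 : D1 true ω = D1 false ω)
    (hD2 : ∀ d1, D2 true d1 ω = D2 false d1 ω)
    (hY : ∀ d1 d2, Yp true d1 d2 ω = Yp false d1 d2 ω) :
    inducedY D1 D2 Yp true ω = inducedY D1 D2 Yp false ω := by
  simp only [inducedY, inducedD2, hD1, hD2, hY]

theorem complierEffect_of_D1_eq {ω : α} (hD1 : D1 true ω = D1 false ω) :
    complierEffect D1 D2 Yp ω = 0 := by
  simp [complierEffect, CCev, CNev, CAev, hD1]

theorem inducedY_sub_eq_complierEffect_of_complier {ω : α} (hD1 : D1 true ω = 1)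
    (hD1' : D1 false ω = 0) (hD2 : D2 true true ω = 0 ∨ D2 true true ω = 1)
    (hD2' : D2 false false ω = 0 ∨ D2 false false ω = 1)
    (hmono : inducedD2 D1 D2 false ω ≤ inducedD2 D1 D2 true ω)
    (hY : ∀ d1 d2, Yp true d1 d2 ω = Yp false d1 d2 ω) :
    inducedY D1 D2 Yp true ω - inducedY D1 D2 Yp false ω = complierEffect D1 D2 Yp ω := by
  -- Monotonicity excludes a complier of the first part who defies in the second.
  have hle : D2 false false ω ≤ D2 true true ω := by simpa [inducedD2, hD1, hD1'] using hmono
  rcases hD2 with h | h <;> rcases hD2' with h' | h'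
  case inl.inr => norm_num [h, h'] at hle
  all_goals
    simp [inducedY, inducedD2, complierEffect, CCev, CNev, CAev, hD1, hD1', h, h', hY]

theorem inducedY_sub_eq_complierEffect {ω : α} (hD101 : ∀ z, D1 z ω = 0 ∨ D1 z ω = 1)
    (hD201 : ∀ z d1, D2 z d1 ω = 0 ∨ D2 z d1 ω = 1) (hmono1 : D1 false ω ≤ D1 true ω)
    (hmono2 : inducedD2 D1 D2 false ω ≤ inducedD2 D1 D2 true ω)
    (hY : ∀ d1 d2, Yp true d1 d2 ω = Yp false d1 d2 ω)
    (hD2 : ∀ d1, D2 true d1 ω = D2 false d1 ω) :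
    inducedY D1 D2 Yp true ω - inducedY D1 D2 Yp false ω = complierEffect D1 D2 Yp ω := by
  by_cases hD1 : D1 true ω = D1 false ω
  · rw [inducedY_eq_of_D1_eq hD1 hD2 hY, sub_self, complierEffect_of_D1_eq hD1]
  · obtain ⟨h, h'⟩ : D1 true ω = 1 ∧ D1 false ω = 0 := by grind
    exact inducedY_sub_eq_complierEffect_of_complier h h' (hD201 _ _) (hD201 _ _) hmono2 hY

end Pointwise

variable {μ : Measure Ω} {Z : Ω → ℝ} {D1 : Bool → Ω → ℝ} {D2 : Bool → Bool → Ω → ℝ}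
  {Yp : Bool → Bool → Bool → Ω → ℝ}

theorem identDistrib_cond_of_indepFun {E F : Type*} [MeasurableSpace E] [MeasurableSpace F]
    [IsFiniteMeasure μ] {X : Ω → E} {W : Ω → F} {s : Set F} (hX : AEMeasurable X μ)
    (hW : Measurable W) (hs : MeasurableSet s) (hXW : IndepFun X W μ) (hs0 : μ (W ⁻¹' s) ≠ 0) :
    IdentDistrib X X μ[|W ⁻¹' s] μ := by
  have hX' : AEMeasurable X μ[|W ⁻¹' s] := hX.mono_ac cond_absolutelyContinuous
  refine ⟨hX', hX, Measure.ext fun t ht => ?_⟩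
  calc (μ[|W ⁻¹' s]).map X t = (μ (W ⁻¹' s))⁻¹ * μ (W ⁻¹' s ∩ X ⁻¹' t) := by
        rw [Measure.map_apply_of_aemeasurable hX' ht, cond_apply (hW hs)]
    _ = (μ (W ⁻¹' s))⁻¹ * (μ (W ⁻¹' s) * μ (X ⁻¹' t)) := by
        rw [hXW.symm.measure_inter_preimage_eq_mul _ _ hs ht]
    _ = μ.map X t := by
        rw [ENNReal.inv_mul_cancel_left hs0 (measure_ne_top μ _),
          Measure.map_apply_of_aemeasurable hX ht]

theorem integral_cond_of_indepFun {E F : Type*} [NormedAddCommGroup E] [NormedSpace ℝ E]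
    [MeasurableSpace E] [BorelSpace E] [MeasurableSpace F] [IsFiniteMeasure μ]
    {A X : Ω → E} {W : Ω → F} {s : Set F} (hX : AEMeasurable X μ) (hW : Measurable W)
    (hs : MeasurableSet s) (hXW : IndepFun X W μ) (hs0 : μ (W ⁻¹' s) ≠ 0)
    (hA : ∀ ω, W ω ∈ s → A ω = X ω) : ∫ ω, A ω ∂μ[|W ⁻¹' s] = ∫ ω, X ω ∂μ := by
  rw [← (identDistrib_cond_of_indepFun hX hW hs hXW hs0).integral_eq]
  exact integral_congr_ae ((ae_cond_mem (hW hs)).mono hA)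

theorem dE_eq_integral_sub [IsFiniteMeasure μ] {A : Ω → ℝ} {X : Bool → Ω → ℝ}
    (hZ : Measurable Z) (hZ1 : μ (Z ⁻¹' {1}) ≠ 0) (hZ0 : μ (Z ⁻¹' {0}) ≠ 0)
    (hX : ∀ z, Integrable (X z) μ) (hXZ : ∀ z, IndepFun (X z) Z μ)
    (hA1 : ∀ ω, Z ω = 1 → A ω = X true ω) (hA0 : ∀ ω, Z ω = 0 → A ω = X false ω) :
    dE μ Z A = ∫ ω, (X true ω - X false ω) ∂μ := by
  rw [dE, integral_sub (hX true) (hX false),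
    integral_cond_of_indepFun (hX true).aemeasurable hZ (.singleton 1) (hXZ true) hZ1 hA1,
    integral_cond_of_indepFun (hX false).aemeasurable hZ (.singleton 0) (hXZ false) hZ0 hA0]

theorem measure_preimage_singleton_ne_zero [IsProbabilityMeasure μ] {F : Type*} {W : Ω → F}
    {a b : F} (hW : ∀ ω, W ω = a ∨ W ω = b) (hb : μ (W ⁻¹' {b}) < 1) : μ (W ⁻¹' {a}) ≠ 0 := by
  intro ha
  have hcover : W ⁻¹' {a} ∪ W ⁻¹' {b} = Set.univ := Set.eq_univ_of_forall hW
  have hle : 1 ≤ μ (W ⁻¹' {a}) + μ (W ⁻¹' {b}) := by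
    rw [← measure_univ (μ := μ), ← hcover]
    exact measure_union_le _ _
  rw [ha, zero_add] at hle
  exact hb.not_ge hle

theorem measurable_realizedAt {f : Bool → Ω → ℝ} {d : Ω → ℝ} (hf : ∀ b, Measurable (f b))
    (hd : Measurable d) : Measurable fun ω => realizedAt (f · ω) (d ω) := by
  unfold realizedAt
  fun_prop

theorem integrable_realizedAt {f : Bool → Ω → ℝ} {d : Ω → ℝ} (hf : ∀ b, Integrable (f b) μ)
    (hd : AEStronglyMeasurable d μ) (hd01 : ∀ ω, d ω = 0 ∨ d ω = 1) :
    Integrable (fun ω => realizedAt (f · ω) (d ω)) μ := by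
  refine ((hf true).mul_bdd (c := 1) hd ?_).add
    ((hf false).mul_bdd (c := 1) (aestronglyMeasurable_const.sub hd) ?_) <;>
  · refine ae_of_all _ fun ω => ?_
    rcases hd01 ω with h | h <;> simp [h]

theorem measurable_inducedD2 {z : Bool} (hD1 : Measurable (D1 z))
    (hD2 : ∀ d1, Measurable (D2 z d1)) : Measurable (inducedD2 D1 D2 z) :=
  measurable_realizedAt hD2 hD1

theorem measurable_inducedY {z : Bool} (hD1 : Measurable (D1 z))
    (hD2 : ∀ d1, Measurable (D2 z d1)) (hY : ∀ d1 d2, Measurable (Yp z d1 d2)) :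
    Measurable (inducedY D1 D2 Yp z) :=
  measurable_realizedAt (fun d1 => measurable_realizedAt (hY d1) (measurable_inducedD2 hD1 hD2)) hD1

theorem integrable_inducedY {z : Bool} (hD1 : Measurable (D1 z))
    (hD2 : ∀ d1, Measurable (D2 z d1)) (hD101 : ∀ ω, D1 z ω = 0 ∨ D1 z ω = 1)
    (hD201 : ∀ d1 ω, D2 z d1 ω = 0 ∨ D2 z d1 ω = 1) (hY : ∀ d1 d2, Integrable (Yp z d1 d2) μ) :
    Integrable (inducedY D1 D2 Yp z) μ :=
  integrable_realizedAt
    (fun d1 => integrable_realizedAt (hY d1) (measurable_inducedD2 hD1 hD2).aestronglyMeasurable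
      fun ω => inducedD2_eq_zero_or_one (hD101 ω) (hD201 · ω))
    hD1.aestronglyMeasurable hD101

theorem indepFun_inducedY
    (hindep : IndepFun (fun ω => ((D1 · ω), (D2 · · ω), (Yp · · · ω))) Z μ) (z : Bool) :
    IndepFun (inducedY D1 D2 Yp z) Z μ :=
  -- `inducedY` is also a function on the space of values of the potential variables.
  hindep.comp (φ := inducedY (Ω := (Bool → ℝ) × (Bool → Bool → ℝ) × (Bool → Bool → Bool → ℝ))
      (fun b v => v.1 b) (fun b b' v => v.2.1 b b') (fun z d1 d2 v => v.2.2 z d1 d2) z)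
    (measurable_inducedY (by fun_prop) (by fun_prop) (by fun_prop)) measurable_id

theorem dE_obsY_eq_integral_inducedY_sub [IsFiniteMeasure μ] (hZ : Measurable Z)
    (hD1 : ∀ z, Measurable (D1 z)) (hD2 : ∀ z d1, Measurable (D2 z d1))
    (hY : ∀ z d1 d2, Integrable (Yp z d1 d2) μ)
    (hZ1 : μ (Z ⁻¹' {1}) ≠ 0) (hZ0 : μ (Z ⁻¹' {0}) ≠ 0)
    (hD101 : ∀ z ω, D1 z ω = 0 ∨ D1 z ω = 1) (hD201 : ∀ z d1 ω, D2 z d1 ω = 0 ∨ D2 z d1 ω = 1)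
    (hindep : IndepFun (fun ω => ((D1 · ω), (D2 · · ω), (Yp · · · ω))) Z μ) :
    dE μ Z (obsY Z D1 D2 Yp) =
      ∫ ω, (inducedY D1 D2 Yp true ω - inducedY D1 D2 Yp false ω) ∂μ :=
  dE_eq_integral_sub hZ hZ1 hZ0
    (fun z => integrable_inducedY (hD1 z) (hD2 z) (hD101 z) (hD201 z) (hY z))
    (indepFun_inducedY hindep) (fun _ => obsY_of_instrument_eq_one)
    (fun _ => obsY_of_instrument_eq_zero)

theorem integral_complierEffect (hD1 : ∀ z, Measurable (D1 z)) (hD2 : ∀ z d1, Measurable (D2 z d1))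
    (hY : ∀ d1 d2, Integrable (Yp true d1 d2) μ) :
    ∫ ω, complierEffect D1 D2 Yp ω ∂μ =
      (∫ ω in CCev D1 D2, (Yp true true true ω - Yp true false false ω) ∂μ) +
      (∫ ω in CNev D1 D2, (Yp true true false ω - Yp true false false ω) ∂μ) +
      (∫ ω in CAev D1 D2, (Yp true true true ω - Yp true false true ω) ∂μ) := by
  have hCC : MeasurableSet (CCev D1 D2) := by unfold CCev; measurability
  have hCN : MeasurableSet (CNev D1 D2) := by unfold CNev; measurability
  have hCA : MeasurableSet (CAev D1 D2) := by unfold CAev; measurability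
  have hCCint := ((hY true true).sub' (hY false false)).indicator hCC
  have hCNint := ((hY true false).sub' (hY false false)).indicator hCN
  have hCAint := ((hY true true).sub' (hY false true)).indicator hCA
  refine (integral_add (hCCint.add hCNint) hCAint).trans ?_
  rw [integral_add' hCCint hCNint, integral_indicator hCC, integral_indicator hCN,
    integral_indicator hCA]

theorem stmt_10_general [IsFiniteMeasure μ] (hZ : Measurable Z)
    (hD1 : ∀ z, Measurable (D1 z)) (hD2 : ∀ z d1, Measurable (D2 z d1))
    (hY : ∀ z d1 d2, Integrable (Yp z d1 d2) μ)
    (hZ1 : μ (Z ⁻¹' {1}) ≠ 0) (hZ0 : μ (Z ⁻¹' {0}) ≠ 0)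
    (hD101 : ∀ z ω, D1 z ω = 0 ∨ D1 z ω = 1) (hD201 : ∀ z d1 ω, D2 z d1 ω = 0 ∨ D2 z d1 ω = 1)
    (hindep : IndepFun (fun ω => ((D1 · ω), (D2 · · ω), (Yp · · · ω))) Z μ)
    (hmono1 : ∀ᵐ ω ∂μ, D1 false ω ≤ D1 true ω)
    (hmono2 : ∀ᵐ ω ∂μ, inducedD2 D1 D2 false ω ≤ inducedD2 D1 D2 true ω)
    (hexcl : ∀ d1 d2, ∀ᵐ ω ∂μ, Yp true d1 d2 ω = Yp false d1 d2 ω)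
    (hdexcl : ∀ d1, ∀ᵐ ω ∂μ, D2 true d1 ω = D2 false d1 ω) :
    dE μ Z (obsY Z D1 D2 Yp) =
      (∫ ω in CCev D1 D2, (Yp true true true ω - Yp true false false ω) ∂μ) +
      (∫ ω in CNev D1 D2, (Yp true true false ω - Yp true false false ω) ∂μ) +
      (∫ ω in CAev D1 D2, (Yp true true true ω - Yp true false true ω) ∂μ) := by
  rw [dE_obsY_eq_integral_inducedY_sub hZ hD1 hD2 hY hZ1 hZ0 hD101 hD201 hindep,
    ← integral_complierEffect hD1 hD2 (hY true)]
  refine integral_congr_ae ?_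
  filter_upwards [hmono1, hmono2, ae_all_iff.2 fun d1 => ae_all_iff.2 (hexcl d1),
    ae_all_iff.2 hdexcl] with ω hm1 hm2 hYω hD2ω
  exact inducedY_sub_eq_complierEffect (hD101 · ω) (hD201 · · ω) hm1 hm2 hYω hD2ω

theorem stmt_10
    (μ : Measure Ω) [IsProbabilityMeasure μ]
    (Z : Ω → ℝ) (D1 : Bool → Ω → ℝ) (D2 : Bool → Bool → Ω → ℝ)
    (Yp : Bool → Bool → Bool → Ω → ℝ)
    (hZmeas : Measurable Z)
    (hD1meas : ∀ b, Measurable (D1 b))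
    (hD2meas : ∀ b b', Measurable (D2 b b'))
    (hYmeas : ∀ z d1 d2, Measurable (Yp z d1 d2))
    (hYint : ∀ z d1 d2, Integrable (Yp z d1 d2) μ)
    (hZ01 : ∀ ω, Z ω = 0 ∨ Z ω = 1)
    (hZpos : 0 < μ (Z ⁻¹' {1})) (hZlt : μ (Z ⁻¹' {1}) < 1)
    (hD101 : ∀ b ω, D1 b ω = 0 ∨ D1 b ω = 1)
    (hD201 : ∀ b b' ω, D2 b b' ω = 0 ∨ D2 b b' ω = 1)
    (hindep : IndepFun
      (fun ω => ((fun b => D1 b ω), (fun b b' => D2 b b' ω), (fun z d1 d2 => Yp z d1 d2 ω))) Z μ)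
    (hrel1 : 0 < dE μ Z (obsD1 Z D1))
    (hrel2 : 0 < dE μ Z (obsD2 Z D1 D2))
    (hrelAnd : 0 < dE μ Z (obsDand Z D1 D2))
    (hrelOr : 0 < dE μ Z (obsDor Z D1 D2))
    (hmono1 : ∀ᵐ ω ∂μ, D1 false ω ≤ D1 true ω)
    (hmono2 : ∀ᵐ ω ∂μ,
      D2 false true ω * D1 false ω + D2 false false ω * (1 - D1 false ω) ≤
        D2 true true ω * D1 true ω + D2 true false ω * (1 - D1 true ω))
    (hexcl : ∀ d1 d2, ∀ᵐ ω ∂μ, Yp true d1 d2 ω = Yp false d1 d2 ω)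
    (hdexcl : ∀ d1, ∀ᵐ ω ∂μ, D2 true d1 ω = D2 false d1 ω) :
    dE μ Z (obsY Z D1 D2 Yp) =
      (∫ ω in CCev D1 D2, (Yp true true true ω - Yp true false false ω) ∂μ) +
      (∫ ω in CNev D1 D2, (Yp true true false ω - Yp true false false ω) ∂μ) +
      (∫ ω in CAev D1 D2, (Yp true true true ω - Yp true false true ω) ∂μ) :=
  stmt_10_general hZmeas hD1meas hD2meas hYint hZpos.ne'
    (measure_preimage_singleton_ne_zero hZ01 hZlt) hD101 hD201 hindep hmono1 hmono2 hexcl hdexcl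
end
end

section
/- (Lower bound on the LAFTE) Under Independence, Relevance, Monotonicity, the Double exclusion restriction, the positive response condition E[Y(0,0); {C1,A2}] ≥ 0, the monotone treatment response conditions E[Y(1,1)−Y(1,0); {C1,N2}] ≥ 0 and E[Y(0,1)−Y(0,0); {C1,A2}] ≥ 0, and the monotone treatment selection conditions μ({C1,N2})·E[Y(1,1); {C1,A2}] ≥ μ({C1,A2})·E[Y(1,1); {C1,N2}] and μ({C1,N2})·E[Y(1,1); {C1,C2}] ≥ μ({C1,C2})·E[Y(1,1); {C1,N2}], it holds that ΔE[Y|Z]/ΔE[D1|Z] ≤ E[Y(1,1)−Y(0,0) | C], where C := {C1,C2} ∪ {C1,N2} ∪ {C1,A2} satisfies μ(C) = ΔE[D1|Z] > 0. (Theorem 1, lower bound) -/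
open MeasureTheory ProbabilityTheory

noncomputable section

variable {Ω : Type*} [MeasurableSpace Ω]

/-!
By independence, `ΔE[Y|Z]` is the mean difference between the outcomes realised under the
assignments `Z = 1` and `Z = 0`. Under double exclusion this difference vanishes wherever the
first treatment does not move; where it does move, monotonicity leaves only the three types
`{C1,C2}`, `{C1,N2}`, `{C1,A2}`, on which it equals `Y(1,1) - Y(0,0)`, `Y(1,0) - Y(0,0)` and
`Y(1,1) - Y(0,1)` respectively. Hence `E[Y(1,1) - Y(0,0); C]` exceeds `ΔE[Y|Z]` by exactly
`E[Y(1,1) - Y(1,0); {C1,N2}] + E[Y(0,1) - Y(0,0); {C1,A2}]`.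
-/

theorem eq_one_and_eq_zero_of_sub_eq_one {a b : ℝ} (ha : a = 0 ∨ a = 1) (hb : b = 0 ∨ b = 1)
    (h : a - b = 1) : a = 1 ∧ b = 0 := by
  rcases ha with rfl | rfl <;> rcases hb with rfl | rfl <;> norm_num at *

theorem one_sub_eq_zero_or_one {a : ℝ} (ha : a = 0 ∨ a = 1) : 1 - a = 0 ∨ 1 - a = 1 := by
  rcases ha with rfl | rfl <;> norm_num

theorem integrable_mul_of_eq_zero_or_one {μ : Measure Ω} {f g : Ω → ℝ} (hf : Integrable f μ)
    (hg : AEStronglyMeasurable g μ) (hg01 : ∀ᵐ ω ∂μ, g ω = 0 ∨ g ω = 1) :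
    Integrable (fun ω => f ω * g ω) μ := by
  refine hf.mul_bdd (c := 1) hg ?_
  filter_upwards [hg01] with ω h
  rcases h with h | h <;> simp [h]

theorem measure_preimage_zero_ne_zero {μ : Measure Ω} [IsProbabilityMeasure μ] {Z : Ω → ℝ}
    (hZ : Measurable Z) (hZ01 : ∀ ω, Z ω = 0 ∨ Z ω = 1) (hZ₁ : μ (Z ⁻¹' {1}) < 1) :
    μ (Z ⁻¹' {0}) ≠ 0 := by
  have compl_eq : Z ⁻¹' {0} = (Z ⁻¹' {1})ᶜ := by
    ext ω
    rcases hZ01 ω with h | h <;> simp [h]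
  rw [compl_eq, Ne, prob_compl_eq_zero_iff (hZ (measurableSet_singleton 1))]
  exact hZ₁.ne

section IndependentConditioning

variable {μ : Measure Ω} [IsFiniteMeasure μ] {𝓧 : Type*} [MeasurableSpace 𝓧] {X : Ω → 𝓧}

theorem integral_cond_preimage_of_indepFun {β E : Type*} [MeasurableSpace β]
    [NormedAddCommGroup E] [NormedSpace ℝ E] {Z : Ω → β} {s : Set β} {f : 𝓧 → E}
    (hXZ : IndepFun X Z μ) (hX : AEMeasurable X μ) (hZ : Measurable Z) (hs : MeasurableSet s)
    (hμs : μ (Z ⁻¹' s) ≠ 0) (hf : AEStronglyMeasurable f (μ.map X)) :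
    ∫ ω, f (X ω) ∂μ[|Z ⁻¹' s] = ∫ ω, f (X ω) ∂μ := by
  have hμs' : (μ (Z ⁻¹' s)).toReal ≠ 0 := ENNReal.toReal_ne_zero.2 ⟨hμs, measure_ne_top _ _⟩
  rw [ProbabilityTheory.cond, integral_smul_measure,
    Indep.setIntegral_eq_smul hZ.comap_le hXZ.symm hX ⟨s, hs, rfl⟩ hf, smul_smul,
    ENNReal.toReal_inv, measureReal_def, inv_mul_cancel₀ hμs', one_smul]

theorem dE_eq_integral_sub_integral_of_indepFun {Z A : Ω → ℝ} {g : Bool → 𝓧 → ℝ}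
    (hXZ : IndepFun X Z μ) (hX : AEMeasurable X μ) (hZ : Measurable Z)
    (hZ₁ : μ (Z ⁻¹' {1}) ≠ 0) (hZ₀ : μ (Z ⁻¹' {0}) ≠ 0) (hg : ∀ z, Measurable (g z))
    (hA₁ : ∀ ω, Z ω = 1 → A ω = g true (X ω)) (hA₀ : ∀ ω, Z ω = 0 → A ω = g false (X ω)) :
    dE μ Z A = (∫ ω, g true (X ω) ∂μ) - ∫ ω, g false (X ω) ∂μ := by
  have cond_integral (z : Bool) (c : ℝ) (hc : μ (Z ⁻¹' {c}) ≠ 0)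
      (hA : ∀ ω, Z ω = c → A ω = g z (X ω)) :
      ∫ ω, A ω ∂μ[|Z ⁻¹' {c}] = ∫ ω, g z (X ω) ∂μ :=
    calc ∫ ω, A ω ∂μ[|Z ⁻¹' {c}]
      _ = ∫ ω, g z (X ω) ∂μ[|Z ⁻¹' {c}] :=
        integral_congr_ae (ae_cond_of_forall_mem (hZ (measurableSet_singleton c)) hA)
      _ = ∫ ω, g z (X ω) ∂μ :=
        integral_cond_preimage_of_indepFun hXZ hX hZ (measurableSet_singleton c) hc
          (hg z).aestronglyMeasurable
  rw [dE, cond_integral true 1 hZ₁ hA₁, cond_integral false 0 hZ₀ hA₀]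

end IndependentConditioning

section PotentialVariables

variable {Ω : Type*}

/-- The second treatment `D2(z, D1(z))` received under the assignment `Z = z`, written out for
a `{0,1}`-valued `D1(z)`. -/
def potD2 (D1 : Bool → Ω → ℝ) (D2 : Bool → Bool → Ω → ℝ) (z : Bool) (ω : Ω) : ℝ :=
  D2 z true ω * D1 z ω + D2 z false ω * (1 - D1 z ω)

/-- The outcome `Y(z, D1(z), D2(z, D1(z)))` realised under the assignment `Z = z`, written out
for `{0,1}`-valued treatments. -/
def potY (D1 : Bool → Ω → ℝ) (D2 : Bool → Bool → Ω → ℝ)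
    (Yp : Bool → Bool → Bool → Ω → ℝ) (z : Bool) (ω : Ω) : ℝ :=
  Yp z true true ω * D1 z ω * potD2 D1 D2 z ω +
  Yp z false true ω * (1 - D1 z ω) * potD2 D1 D2 z ω +
  Yp z true false ω * D1 z ω * (1 - potD2 D1 D2 z ω) +
  Yp z false false ω * (1 - D1 z ω) * (1 - potD2 D1 D2 z ω)

/-- The random vector of all potential treatments and outcomes, which Independence requires to
be independent of the instrument. -/
def potVec (D1 : Bool → Ω → ℝ) (D2 : Bool → Bool → Ω → ℝ)
    (Yp : Bool → Bool → Bool → Ω → ℝ) (ω : Ω) :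
    (Bool → ℝ) × (Bool → Bool → ℝ) × (Bool → Bool → Bool → ℝ) :=
  (fun b => D1 b ω, fun b b' => D2 b b' ω, fun z d1 d2 => Yp z d1 d2 ω)

/-- The event `C` that the first treatment responds to the instrument, as the union of the three
types that Monotonicity allows; see `mem_compliers_iff`. -/
def compliers (D1 : Bool → Ω → ℝ) (D2 : Bool → Bool → Ω → ℝ) : Set Ω :=
  CCev D1 D2 ∪ CNev D1 D2 ∪ CAev D1 D2

variable {D1 : Bool → Ω → ℝ} {D2 : Bool → Bool → Ω → ℝ} {Yp : Bool → Bool → Bool → Ω → ℝ}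

theorem potD2_eq_zero_or_one {z : Bool} {ω : Ω} (hD1 : D1 z ω = 0 ∨ D1 z ω = 1)
    (hD2 : ∀ b, D2 z b ω = 0 ∨ D2 z b ω = 1) :
    potD2 D1 D2 z ω = 0 ∨ potD2 D1 D2 z ω = 1 := by
  rcases hD1 with h | h <;> simpa [potD2, h] using hD2 _

theorem potY_true_eq_potY_false {ω : Ω} (hD1 : D1 true ω = D1 false ω)
    (hD2 : ∀ d1, D2 true d1 ω = D2 false d1 ω)
    (hY : ∀ d1 d2, Yp true d1 d2 ω = Yp false d1 d2 ω) :
    potY D1 D2 Yp true ω = potY D1 D2 Yp false ω := by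
  simp only [potY, potD2, hD1, hD2, hY]

theorem potY_true_sub_potY_false_of_responds {ω : Ω} (hD1 : D1 true ω = 1 ∧ D1 false ω = 0)
    (hY : ∀ d1 d2, Yp true d1 d2 ω = Yp false d1 d2 ω) :
    potY D1 D2 Yp true ω - potY D1 D2 Yp false ω =
      (Yp true true true ω * D2 true true ω + Yp true true false ω * (1 - D2 true true ω)) -
      (Yp true false true ω * D2 false false ω +
        Yp true false false ω * (1 - D2 false false ω)) := by
  simp only [potY, potD2, hD1.1, hD1.2, hY]
  ring

theorem mem_compliers_iff {ω : Ω} (hD1 : ∀ b, D1 b ω = 0 ∨ D1 b ω = 1)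
    (hD2 : ∀ b, D2 b b ω = 0 ∨ D2 b b ω = 1)
    (hmono : potD2 D1 D2 false ω ≤ potD2 D1 D2 true ω) :
    ω ∈ compliers D1 D2 ↔ D1 true ω - D1 false ω = 1 := by
  refine ⟨?_, fun h => ?_⟩
  · rintro ((hCC | hCN) | hCA)
    exacts [hCC.1, hCN.1, hCA.1]
  · obtain ⟨h1, h0⟩ := eq_one_and_eq_zero_of_sub_eq_one (hD1 true) (hD1 false) h
    have no_defier : D2 false false ω ≤ D2 true true ω := by simpa [potD2, h1, h0] using hmono
    rcases hD2 false with hf | hf <;> rcases hD2 true with ht | ht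
    · exact .inl (.inr ⟨h, ht, hf⟩)
    · exact .inl (.inl ⟨h, by rw [ht, hf, sub_zero]⟩)
    · norm_num [hf, ht] at no_defier
    · exact .inr ⟨h, ht, hf⟩

theorem eq_of_notMem_compliers {ω : Ω} (hD1 : ∀ b, D1 b ω = 0 ∨ D1 b ω = 1)
    (hD2 : ∀ b, D2 b b ω = 0 ∨ D2 b b ω = 1) (hmono1 : D1 false ω ≤ D1 true ω)
    (hmono2 : potD2 D1 D2 false ω ≤ potD2 D1 D2 true ω) (hω : ω ∉ compliers D1 D2) :
    D1 true ω = D1 false ω := by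
  rw [mem_compliers_iff hD1 hD2 hmono2] at hω
  rcases hD1 true with ht | ht <;> rcases hD1 false with hf | hf
  · rw [ht, hf]
  · linarith
  · exact absurd (by rw [ht, hf, sub_zero]) hω
  · rw [ht, hf]

theorem disjoint_CCev_CNev : Disjoint (CCev D1 D2) (CNev D1 D2) := by
  refine Set.disjoint_left.2 fun ω hCC hCN => ?_
  linarith [hCC.2, hCN.2.1, hCN.2.2]

theorem disjoint_CCev_union_CNev_CAev : Disjoint (CCev D1 D2 ∪ CNev D1 D2) (CAev D1 D2) := by
  refine Set.disjoint_left.2 fun ω h hCA => ?_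
  rcases h with hCC | hCN
  · linarith [hCC.2, hCA.2.1, hCA.2.2]
  · linarith [hCN.2.1, hCA.2.1]

end PotentialVariables

section Measurability

variable {D1 : Bool → Ω → ℝ} {D2 : Bool → Bool → Ω → ℝ} {Yp : Bool → Bool → Bool → Ω → ℝ}

theorem measurable_potD2 (hD1 : ∀ b, Measurable (D1 b)) (hD2 : ∀ b b', Measurable (D2 b b'))
    (z : Bool) : Measurable (potD2 D1 D2 z) := by
  unfold potD2
  fun_prop

theorem measurable_potY (hD1 : ∀ b, Measurable (D1 b)) (hD2 : ∀ b b', Measurable (D2 b b'))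
    (hY : ∀ z d1 d2, Measurable (Yp z d1 d2)) (z : Bool) : Measurable (potY D1 D2 Yp z) := by
  have := measurable_potD2 hD1 hD2 z
  unfold potY
  fun_prop

theorem measurable_potVec (hD1 : ∀ b, Measurable (D1 b)) (hD2 : ∀ b b', Measurable (D2 b b'))
    (hY : ∀ z d1 d2, Measurable (Yp z d1 d2)) : Measurable (potVec D1 D2 Yp) := by
  unfold potVec
  fun_prop

theorem integrable_potY {μ : Measure Ω} (hD1 : ∀ b, Measurable (D1 b))
    (hD2 : ∀ b b', Measurable (D2 b b')) (hD101 : ∀ b ω, D1 b ω = 0 ∨ D1 b ω = 1)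
    (hD201 : ∀ b b' ω, D2 b b' ω = 0 ∨ D2 b b' ω = 1)
    (hY : ∀ z d1 d2, Integrable (Yp z d1 d2) μ) (z : Bool) :
    Integrable (potY D1 D2 Yp z) μ := by
  have restrict_by {d : Ω → ℝ} (hd : Measurable d) (hd01 : ∀ ω, d ω = 0 ∨ d ω = 1) {f : Ω → ℝ}
      (hf : Integrable f μ) :
      Integrable (fun ω => f ω * d ω) μ ∧ Integrable (fun ω => f ω * (1 - d ω)) μ :=
    ⟨integrable_mul_of_eq_zero_or_one hf hd.aestronglyMeasurable (.of_forall hd01),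
      integrable_mul_of_eq_zero_or_one hf (hd.const_sub 1).aestronglyMeasurable
        (.of_forall fun ω => one_sub_eq_zero_or_one (hd01 ω))⟩
  have by_D1 {f : Ω → ℝ} (hf : Integrable f μ) := restrict_by (hD1 z) (hD101 z) hf
  have by_D2 {f : Ω → ℝ} (hf : Integrable f μ) := restrict_by (measurable_potD2 hD1 hD2 z)
    (fun ω => potD2_eq_zero_or_one (hD101 z ω) fun b => hD201 z b ω) hf
  exact (((by_D2 (by_D1 (hY z true true)).1).1.add (by_D2 (by_D1 (hY z false true)).2).1).add
    (by_D2 (by_D1 (hY z true false)).1).2).add (by_D2 (by_D1 (hY z false false)).2).2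

theorem measurableSet_CCev (hD1 : ∀ b, Measurable (D1 b)) (hD2 : ∀ b b', Measurable (D2 b b')) :
    MeasurableSet (CCev D1 D2) :=
  (measurableSet_eq_fun ((hD1 _).sub (hD1 _)) measurable_const).inter
    (measurableSet_eq_fun ((hD2 _ _).sub (hD2 _ _)) measurable_const)

theorem measurableSet_CNev (hD1 : ∀ b, Measurable (D1 b)) (hD2 : ∀ b b', Measurable (D2 b b')) :
    MeasurableSet (CNev D1 D2) :=
  (measurableSet_eq_fun ((hD1 _).sub (hD1 _)) measurable_const).inter
    ((measurableSet_eq_fun (hD2 _ _) measurable_const).inter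
      (measurableSet_eq_fun (hD2 _ _) measurable_const))

theorem measurableSet_CAev (hD1 : ∀ b, Measurable (D1 b)) (hD2 : ∀ b b', Measurable (D2 b b')) :
    MeasurableSet (CAev D1 D2) :=
  (measurableSet_eq_fun ((hD1 _).sub (hD1 _)) measurable_const).inter
    ((measurableSet_eq_fun (hD2 _ _) measurable_const).inter
      (measurableSet_eq_fun (hD2 _ _) measurable_const))

theorem measurableSet_compliers (hD1 : ∀ b, Measurable (D1 b))
    (hD2 : ∀ b b', Measurable (D2 b b')) : MeasurableSet (compliers D1 D2) :=
  ((measurableSet_CCev hD1 hD2).union (measurableSet_CNev hD1 hD2)).union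
    (measurableSet_CAev hD1 hD2)

theorem setIntegral_compliers {μ : Measure Ω} {f : Ω → ℝ} (hD1 : ∀ b, Measurable (D1 b))
    (hD2 : ∀ b b', Measurable (D2 b b')) (hf : Integrable f μ) :
    ∫ ω in compliers D1 D2, f ω ∂μ =
      (∫ ω in CCev D1 D2, f ω ∂μ) + (∫ ω in CNev D1 D2, f ω ∂μ) + ∫ ω in CAev D1 D2, f ω ∂μ := by
  rw [compliers, setIntegral_union disjoint_CCev_union_CNev_CAev (measurableSet_CAev hD1 hD2)
      hf.integrableOn hf.integrableOn,
    setIntegral_union disjoint_CCev_CNev (measurableSet_CNev hD1 hD2)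
      hf.integrableOn hf.integrableOn]

end Measurability

section Identification

variable {μ : Measure Ω} [IsFiniteMeasure μ] {Z : Ω → ℝ} {D1 : Bool → Ω → ℝ}
  {D2 : Bool → Bool → Ω → ℝ} {Yp : Bool → Bool → Bool → Ω → ℝ}

theorem dE_obsD1_eq (hindep : IndepFun (potVec D1 D2 Yp) Z μ)
    (hV : AEMeasurable (potVec D1 D2 Yp) μ) (hZ : Measurable Z)
    (hZ₁ : μ (Z ⁻¹' {1}) ≠ 0) (hZ₀ : μ (Z ⁻¹' {0}) ≠ 0) :
    dE μ Z (obsD1 Z D1) = (∫ ω, D1 true ω ∂μ) - ∫ ω, D1 false ω ∂μ :=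
  dE_eq_integral_sub_integral_of_indepFun (g := fun z v => v.1 z) hindep hV hZ hZ₁ hZ₀
    (fun _ => by fun_prop) (fun ω h => by simp [obsD1, potVec, h])
    (fun ω h => by simp [obsD1, potVec, h])

theorem dE_obsY_eq (hindep : IndepFun (potVec D1 D2 Yp) Z μ)
    (hV : AEMeasurable (potVec D1 D2 Yp) μ) (hZ : Measurable Z)
    (hZ₁ : μ (Z ⁻¹' {1}) ≠ 0) (hZ₀ : μ (Z ⁻¹' {0}) ≠ 0) :
    dE μ Z (obsY Z D1 D2 Yp) =
      (∫ ω, potY D1 D2 Yp true ω ∂μ) - ∫ ω, potY D1 D2 Yp false ω ∂μ :=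
  -- `potY` of the coordinate functions, evaluated at `potVec D1 D2 Yp ω`, is `potY D1 D2 Yp z ω`.
  dE_eq_integral_sub_integral_of_indepFun
    (g := potY (fun b v => v.1 b) (fun b b' v => v.2.1 b b') (fun z d1 d2 v => v.2.2 z d1 d2))
    hindep hV hZ hZ₁ hZ₀
    (measurable_potY (by fun_prop) (by fun_prop) (by fun_prop))
    (fun ω h => by simp [obsY, obsD1, obsD2, potY, potD2, potVec, h])
    (fun ω h => by simp [obsY, obsD1, obsD2, potY, potD2, potVec, h])

theorem measureReal_compliers (hD1 : ∀ b, Measurable (D1 b)) (hD2 : ∀ b b', Measurable (D2 b b'))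
    (hD101 : ∀ b ω, D1 b ω = 0 ∨ D1 b ω = 1) (hD201 : ∀ b ω, D2 b b ω = 0 ∨ D2 b b ω = 1)
    (hmono1 : ∀ᵐ ω ∂μ, D1 false ω ≤ D1 true ω)
    (hmono2 : ∀ᵐ ω ∂μ, potD2 D1 D2 false ω ≤ potD2 D1 D2 true ω) :
    μ.real (compliers D1 D2) = (∫ ω, D1 true ω ∂μ) - ∫ ω, D1 false ω ∂μ := by
  have integrable_D1 (b : Bool) : Integrable (D1 b) μ := by
    simpa using integrable_mul_of_eq_zero_or_one (integrable_const 1)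
      (hD1 b).aestronglyMeasurable (.of_forall (hD101 b))
  rw [← integral_sub (integrable_D1 true) (integrable_D1 false),
    ← integral_indicator_one (measurableSet_compliers hD1 hD2)]
  refine integral_congr_ae ?_
  filter_upwards [hmono1, hmono2] with ω h1 h2
  by_cases hω : ω ∈ compliers D1 D2
  · have responds := (mem_compliers_iff (hD101 · ω) (hD201 · ω) h2).1 hω
    simp [hω, responds]
  · simp [hω, eq_of_notMem_compliers (hD101 · ω) (hD201 · ω) h1 h2 hω]

end Identification

section ReducedForm

variable {μ : Measure Ω} {D1 : Bool → Ω → ℝ} {D2 : Bool → Bool → Ω → ℝ}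
  {Yp : Bool → Bool → Bool → Ω → ℝ}

theorem integral_potY_sub_eq_setIntegral_compliers
    (hD1 : ∀ b, Measurable (D1 b)) (hD2 : ∀ b b', Measurable (D2 b b'))
    (hD101 : ∀ b ω, D1 b ω = 0 ∨ D1 b ω = 1) (hD201 : ∀ b b' ω, D2 b b' ω = 0 ∨ D2 b b' ω = 1)
    (hY : ∀ z d1 d2, Integrable (Yp z d1 d2) μ)
    (hmono1 : ∀ᵐ ω ∂μ, D1 false ω ≤ D1 true ω)
    (hmono2 : ∀ᵐ ω ∂μ, potD2 D1 D2 false ω ≤ potD2 D1 D2 true ω)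
    (hexcl : ∀ d1 d2, ∀ᵐ ω ∂μ, Yp true d1 d2 ω = Yp false d1 d2 ω)
    (hdexcl : ∀ d1, ∀ᵐ ω ∂μ, D2 true d1 ω = D2 false d1 ω) :
    (∫ ω, potY D1 D2 Yp true ω ∂μ) - ∫ ω, potY D1 D2 Yp false ω ∂μ =
      ∫ ω in compliers D1 D2, (potY D1 D2 Yp true ω - potY D1 D2 Yp false ω) ∂μ := by
  have integrable_pot := integrable_potY hD1 hD2 hD101 hD201 hY
  rw [← integral_sub (integrable_pot true) (integrable_pot false)]
  refine (setIntegral_eq_integral_of_ae_compl_eq_zero ?_).symm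
  simp only [← ae_all_iff] at hexcl hdexcl
  filter_upwards [hmono1, hmono2, hexcl, hdexcl] with ω h1 h2 hY hD2 hω
  exact sub_eq_zero.2 (potY_true_eq_potY_false
    (eq_of_notMem_compliers (hD101 · ω) (fun b => hD201 b b ω) h1 h2 hω) hD2 hY)

theorem setIntegral_compliers_potY_sub
    (hD1 : ∀ b, Measurable (D1 b)) (hD2 : ∀ b b', Measurable (D2 b b'))
    (hD101 : ∀ b ω, D1 b ω = 0 ∨ D1 b ω = 1) (hD201 : ∀ b b' ω, D2 b b' ω = 0 ∨ D2 b b' ω = 1)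
    (hY : ∀ z d1 d2, Integrable (Yp z d1 d2) μ)
    (hexcl : ∀ d1 d2, ∀ᵐ ω ∂μ, Yp true d1 d2 ω = Yp false d1 d2 ω) :
    ∫ ω in compliers D1 D2, (potY D1 D2 Yp true ω - potY D1 D2 Yp false ω) ∂μ =
      (∫ ω in CCev D1 D2, (Yp true true true ω - Yp true false false ω) ∂μ) +
      (∫ ω in CNev D1 D2, (Yp true true false ω - Yp true false false ω) ∂μ) +
      ∫ ω in CAev D1 D2, (Yp true true true ω - Yp true false true ω) ∂μ := by
  have integrable_pot := integrable_potY hD1 hD2 hD101 hD201 hY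
  have effect : ∀ᵐ ω ∂μ, D1 true ω - D1 false ω = 1 →
      potY D1 D2 Yp true ω - potY D1 D2 Yp false ω =
        (Yp true true true ω * D2 true true ω + Yp true true false ω * (1 - D2 true true ω)) -
        (Yp true false true ω * D2 false false ω +
          Yp true false false ω * (1 - D2 false false ω)) := by
    simp only [← ae_all_iff] at hexcl
    filter_upwards [hexcl] with ω hY h
    exact potY_true_sub_potY_false_of_responds
      (eq_one_and_eq_zero_of_sub_eq_one (hD101 true ω) (hD101 false ω) h) hY
  refine (setIntegral_compliers hD1 hD2 ((integrable_pot true).sub (integrable_pot false))).trans ?_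
  refine congrArg₂ (· + ·) (congrArg₂ (· + ·) ?_ ?_) ?_
  · refine setIntegral_congr_ae (measurableSet_CCev hD1 hD2) ?_
    filter_upwards [effect] with ω h ⟨hC1, hC2⟩
    obtain ⟨ht, hf⟩ := eq_one_and_eq_zero_of_sub_eq_one (hD201 _ _ ω) (hD201 _ _ ω) hC2
    simp [h hC1, ht, hf]
  · refine setIntegral_congr_ae (measurableSet_CNev hD1 hD2) ?_
    filter_upwards [effect] with ω h ⟨hC1, ht, hf⟩
    simp [h hC1, ht, hf]
  · refine setIntegral_congr_ae (measurableSet_CAev hD1 hD2) ?_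
    filter_upwards [effect] with ω h ⟨hC1, ht, hf⟩
    simp [h hC1, ht, hf]

theorem setIntegral_compliers_sub_eq_add
    (hD1 : ∀ b, Measurable (D1 b)) (hD2 : ∀ b b', Measurable (D2 b b'))
    (hD101 : ∀ b ω, D1 b ω = 0 ∨ D1 b ω = 1) (hD201 : ∀ b b' ω, D2 b b' ω = 0 ∨ D2 b b' ω = 1)
    (hY : ∀ z d1 d2, Integrable (Yp z d1 d2) μ)
    (hexcl : ∀ d1 d2, ∀ᵐ ω ∂μ, Yp true d1 d2 ω = Yp false d1 d2 ω) :
    ∫ ω in compliers D1 D2, (Yp true true true ω - Yp true false false ω) ∂μ =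
      (∫ ω in compliers D1 D2, (potY D1 D2 Yp true ω - potY D1 D2 Yp false ω) ∂μ) +
      (∫ ω in CNev D1 D2, (Yp true true true ω - Yp true true false ω) ∂μ) +
      ∫ ω in CAev D1 D2, (Yp true false true ω - Yp true false false ω) ∂μ := by
  have integral_Y_sub (s : Set Ω) (d1 d2 d1' d2' : Bool) :
      ∫ ω in s, (Yp true d1 d2 ω - Yp true d1' d2' ω) ∂μ =
        (∫ ω in s, Yp true d1 d2 ω ∂μ) - ∫ ω in s, Yp true d1' d2' ω ∂μ :=
    integral_sub (hY _ _ _).integrableOn (hY _ _ _).integrableOn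
  have split := setIntegral_compliers hD1 hD2 ((hY true true true).sub (hY true false false))
  rw [setIntegral_compliers_potY_sub hD1 hD2 hD101 hD201 hY hexcl]
  simp only [Pi.sub_apply, integral_Y_sub] at split ⊢
  linarith

end ReducedForm

theorem stmt_11_general
    (μ : Measure Ω) [IsProbabilityMeasure μ]
    (Z : Ω → ℝ) (D1 : Bool → Ω → ℝ) (D2 : Bool → Bool → Ω → ℝ)
    (Yp : Bool → Bool → Bool → Ω → ℝ)
    (hZmeas : Measurable Z)
    (hD1meas : ∀ b, Measurable (D1 b))
    (hD2meas : ∀ b b', Measurable (D2 b b'))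
    (hYmeas : ∀ z d1 d2, Measurable (Yp z d1 d2))
    (hYint : ∀ z d1 d2, Integrable (Yp z d1 d2) μ)
    (hZ01 : ∀ ω, Z ω = 0 ∨ Z ω = 1)
    (hZpos : 0 < μ (Z ⁻¹' {1})) (hZlt : μ (Z ⁻¹' {1}) < 1)
    (hD101 : ∀ b ω, D1 b ω = 0 ∨ D1 b ω = 1)
    (hD201 : ∀ b b' ω, D2 b b' ω = 0 ∨ D2 b b' ω = 1)
    (hindep : IndepFun
      (fun ω => ((fun b => D1 b ω), (fun b b' => D2 b b' ω), (fun z d1 d2 => Yp z d1 d2 ω))) Z μ)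
    (hrel1 : 0 < dE μ Z (obsD1 Z D1))
    (hmono1 : ∀ᵐ ω ∂μ, D1 false ω ≤ D1 true ω)
    (hmono2 : ∀ᵐ ω ∂μ,
      D2 false true ω * D1 false ω + D2 false false ω * (1 - D1 false ω) ≤
        D2 true true ω * D1 true ω + D2 true false ω * (1 - D1 true ω))
    (hexcl : ∀ d1 d2, ∀ᵐ ω ∂μ, Yp true d1 d2 ω = Yp false d1 d2 ω)
    (hdexcl : ∀ d1, ∀ᵐ ω ∂μ, D2 true d1 ω = D2 false d1 ω)
    (hmtr1 : 0 ≤ ∫ ω in CNev D1 D2, (Yp true true true ω - Yp true true false ω) ∂μ)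
    (hmtr2 : 0 ≤ ∫ ω in CAev D1 D2, (Yp true false true ω - Yp true false false ω) ∂μ) :
    (μ (CCev D1 D2 ∪ CNev D1 D2 ∪ CAev D1 D2)).toReal = dE μ Z (obsD1 Z D1) ∧
    dE μ Z (obsY Z D1 D2 Yp) / dE μ Z (obsD1 Z D1) ≤
      (∫ ω in CCev D1 D2 ∪ CNev D1 D2 ∪ CAev D1 D2,
          (Yp true true true ω - Yp true false false ω) ∂μ) /
        (μ (CCev D1 D2 ∪ CNev D1 D2 ∪ CAev D1 D2)).toReal := by
  have hZ₀ : μ (Z ⁻¹' {0}) ≠ 0 := measure_preimage_zero_ne_zero hZmeas hZ01 hZlt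
  have hV : AEMeasurable (potVec D1 D2 Yp) μ :=
    (measurable_potVec hD1meas hD2meas hYmeas).aemeasurable
  have measure_compliers : (μ (compliers D1 D2)).toReal = dE μ Z (obsD1 Z D1) := by
    rw [dE_obsD1_eq hindep hV hZmeas hZpos.ne' hZ₀]
    exact measureReal_compliers hD1meas hD2meas hD101 (fun b => hD201 b b) hmono1 hmono2
  have effect_le : dE μ Z (obsY Z D1 D2 Yp) ≤
      ∫ ω in compliers D1 D2, (Yp true true true ω - Yp true false false ω) ∂μ := by
    rw [setIntegral_compliers_sub_eq_add hD1meas hD2meas hD101 hD201 hYint hexcl,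
      dE_obsY_eq hindep hV hZmeas hZpos.ne' hZ₀,
      integral_potY_sub_eq_setIntegral_compliers hD1meas hD2meas hD101 hD201 hYint hmono1 hmono2
        hexcl hdexcl]
    linarith
  refine ⟨measure_compliers, ?_⟩
  rw [← compliers, measure_compliers]
  exact div_le_div_of_nonneg_right effect_le hrel1.le

theorem stmt_11
    (μ : Measure Ω) [IsProbabilityMeasure μ]
    (Z : Ω → ℝ) (D1 : Bool → Ω → ℝ) (D2 : Bool → Bool → Ω → ℝ)
    (Yp : Bool → Bool → Bool → Ω → ℝ)
    (hZmeas : Measurable Z)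
    (hD1meas : ∀ b, Measurable (D1 b))
    (hD2meas : ∀ b b', Measurable (D2 b b'))
    (hYmeas : ∀ z d1 d2, Measurable (Yp z d1 d2))
    (hYint : ∀ z d1 d2, Integrable (Yp z d1 d2) μ)
    (hZ01 : ∀ ω, Z ω = 0 ∨ Z ω = 1)
    (hZpos : 0 < μ (Z ⁻¹' {1})) (hZlt : μ (Z ⁻¹' {1}) < 1)
    (hD101 : ∀ b ω, D1 b ω = 0 ∨ D1 b ω = 1)
    (hD201 : ∀ b b' ω, D2 b b' ω = 0 ∨ D2 b b' ω = 1)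
    (hindep : IndepFun
      (fun ω => ((fun b => D1 b ω), (fun b b' => D2 b b' ω), (fun z d1 d2 => Yp z d1 d2 ω))) Z μ)
    (hrel1 : 0 < dE μ Z (obsD1 Z D1))
    (hrel2 : 0 < dE μ Z (obsD2 Z D1 D2))
    (hrelAnd : 0 < dE μ Z (obsDand Z D1 D2))
    (hrelOr : 0 < dE μ Z (obsDor Z D1 D2))
    (hmono1 : ∀ᵐ ω ∂μ, D1 false ω ≤ D1 true ω)
    (hmono2 : ∀ᵐ ω ∂μ,
      D2 false true ω * D1 false ω + D2 false false ω * (1 - D1 false ω) ≤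
        D2 true true ω * D1 true ω + D2 true false ω * (1 - D1 true ω))
    (hexcl : ∀ d1 d2, ∀ᵐ ω ∂μ, Yp true d1 d2 ω = Yp false d1 d2 ω)
    (hdexcl : ∀ d1, ∀ᵐ ω ∂μ, D2 true d1 ω = D2 false d1 ω)
    (hpos : 0 ≤ ∫ ω in CAev D1 D2, Yp true false false ω ∂μ)
    (hmtr1 : 0 ≤ ∫ ω in CNev D1 D2, (Yp true true true ω - Yp true true false ω) ∂μ)
    (hmtr2 : 0 ≤ ∫ ω in CAev D1 D2, (Yp true false true ω - Yp true false false ω) ∂μ)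
    (hmts1 : (μ (CAev D1 D2)).toReal * ∫ ω in CNev D1 D2, Yp true true true ω ∂μ ≤
      (μ (CNev D1 D2)).toReal * ∫ ω in CAev D1 D2, Yp true true true ω ∂μ)
    (hmts2 : (μ (CCev D1 D2)).toReal * ∫ ω in CNev D1 D2, Yp true true true ω ∂μ ≤
      (μ (CNev D1 D2)).toReal * ∫ ω in CCev D1 D2, Yp true true true ω ∂μ) :
    (μ (CCev D1 D2 ∪ CNev D1 D2 ∪ CAev D1 D2)).toReal = dE μ Z (obsD1 Z D1) ∧
    dE μ Z (obsY Z D1 D2 Yp) / dE μ Z (obsD1 Z D1) ≤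
      (∫ ω in CCev D1 D2 ∪ CNev D1 D2 ∪ CAev D1 D2, (Yp true true true ω - Yp true false false ω) ∂μ) /
        (μ (CCev D1 D2 ∪ CNev D1 D2 ∪ CAev D1 D2)).toReal :=
  stmt_11_general μ Z D1 D2 Yp hZmeas hD1meas hD2meas hYmeas hYint hZ01 hZpos hZlt hD101 hD201
    hindep hrel1 hmono1 hmono2 hexcl hdexcl hmtr1 hmtr2
end
end
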